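/- arXiv:2303.10503 — 10 statements merged into one kernel-verified Lean document; each statement's English description precedes it below -/
import Mathlib

section
/- Let ℓ ≥ 1 and let (x_t)_{t∈ℕ} be a sequence in ℝ^d generated by an order-ℓ stationary first-order method, and let K ≥ 2 be an integer. Then the score s_K = Σ_{t=0}^{ℓ−1} ‖x_t − x_{t+K}‖² equals 0 if and only if x_{t+K} = x_t for all t ∈ ℕ. -/
/-- For a sequence in `ℝ^d` generated by an order-`ℓ` stationary
first-order method and an integer `K ≥ 2`, the score
`s_K = ∑_{t=0}^{ℓ-1} ‖x t - x (t+K)‖²` vanishes iff the sequence is `K`-periodic. -/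
theorem sfom_score_eq_zero_iff_cycle {d : ℕ} {Y : Type*} (ℓ : ℕ) (hℓ : 1 ≤ ℓ)
    (O : EuclideanSpace ℝ (Fin d) → Y)
    (A : (Fin ℓ → EuclideanSpace ℝ (Fin d) × Y) → EuclideanSpace ℝ (Fin d))
    (x : ℕ → EuclideanSpace ℝ (Fin d))
    (hx : ∀ t, ℓ ≤ t →
      x t = A (fun s => (x (t - (s : ℕ) - 1), O (x (t - (s : ℕ) - 1)))))
    (K : ℕ) (hK : 2 ≤ K) :
    ∑ t ∈ Finset.range ℓ, ‖x t - x (t + K)‖ ^ 2 = 0 ↔ ∀ t, x (t + K) = x t := by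
  constructor
  · intro h
    rw [Finset.sum_eq_zero_iff_of_nonneg (fun i _ => by positivity)] at h
    intro t
    induction t using Nat.strong_induction_on with
    | _ t ih =>
      by_cases ht : t < ℓ
      · have h1 := h t (Finset.mem_range.mpr ht)
        have h2 : ‖x t - x (t + K)‖ = 0 := pow_eq_zero_iff (two_ne_zero) |>.mp h1
        exact (sub_eq_zero.mp (norm_eq_zero.mp h2)).symm
      · rw [hx (t + K) (by omega), hx t (by omega)]
        congr 1
        funext s
        have hs := s.isLt
        have e : t + K - (s : ℕ) - 1 = (t - (s : ℕ) - 1) + K := by omega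
        rw [e, ih (t - (s : ℕ) - 1) (by omega)]
  · intro h
    apply Finset.sum_eq_zero
    intro t _
    rw [h t]
    simp
end

section
/- Let L > 0, β ∈ [0, 1], γ = (2/L)·(1+β)/(1+2β), and a ∈ ℝ with a ≠ 0. Consider f : ℝ → ℝ, f(y) = (L/2)y², which is convex and L-smooth. Then the sequence defined by y_0 = a, y_1 = −a, and y_{t+1} = (1+β)(y_t − γ f'(y_t)) − β(y_{t−1} − γ f'(y_{t−1})) for t ≥ 1 satisfies y_t = (−1)^t a for all t; in particular this Nesterov-accelerated-gradient trajectory is 2-cyclic and non-constant, so it does not converge. -/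
/-- For `γ = (2/L)(1+β)/(1+2β)` on the boundary of the NAG
convergence region, the NAG trajectory on the convex `L`-smooth quadratic
`f(y) = (L/2) y²` started at `y₀ = a`, `y₁ = -a` satisfies `y t = (-1)^t a`:
it is 2-cyclic, non-constant, hence does not converge. -/
theorem nag_boundary_two_cycle (L β γ a : ℝ) (hL : 0 < L)
    (hβ : β ∈ Set.Icc (0 : ℝ) 1)
    (hγ : γ = 2 / L * ((1 + β) / (1 + 2 * β))) (ha : a ≠ 0)
    (f : ℝ → ℝ) (hf : f = fun y => L / 2 * y ^ 2)
    (y : ℕ → ℝ) (hy0 : y 0 = a) (hy1 : y 1 = -a)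
    (hrec : ∀ t, 1 ≤ t → y (t + 1) =
      (1 + β) * (y t - γ * deriv f (y t)) -
        β * (y (t - 1) - γ * deriv f (y (t - 1)))) :
    ConvexOn ℝ Set.univ f ∧ LipschitzWith (Real.toNNReal L) (deriv f) ∧
      (∀ t, y t = (-1) ^ t * a) ∧ (∀ t, y (t + 2) = y t) ∧
      (∃ s t, y s ≠ y t) ∧ ¬∃ l, Filter.Tendsto y Filter.atTop (nhds l) := by
  obtain ⟨hβ0, hβ1⟩ := hβ
  have hd : deriv f = fun x => L * x := by
    funext x
    have h : HasDerivAt f (L / 2 * (2 * x)) x := by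
      rw [hf]
      simpa using ((hasDerivAt_pow 2 x).const_mul (L / 2))
    rw [h.deriv]
    ring
  have hb : (1 + 2 * β) ≠ 0 := by positivity
  have hg : γ * L * (1 + 2 * β) = 2 * (1 + β) := by
    rw [hγ]
    field_simp
  have key : ∀ t, y t = (-1) ^ t * a ∧ y (t + 1) = (-1) ^ (t + 1) * a := by
    intro t
    induction t with
    | zero => simp [hy0, hy1]
    | succ n ih =>
      refine ⟨ih.2, ?_⟩
      have h := hrec (n + 1) (by omega)
      rw [hd, Nat.add_sub_cancel, ih.1, ih.2] at h
      rw [h, pow_succ, pow_succ]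
      linear_combination ((-1) ^ n * a) * hg
  have hy : ∀ t, y t = (-1) ^ t * a := fun t => (key t).1
  have hne : a ≠ -a := fun h => ha (by linarith)
  refine ⟨?_, ?_, hy, ?_, ⟨0, 1, ?_⟩, ?_⟩
  · have h := (Even.convexOn_pow (𝕜 := ℝ) (n := 2) even_two).smul (c := L / 2) (by positivity)
    rw [hf]
    simpa [smul_eq_mul] using h
  · rw [hd]
    refine LipschitzWith.of_dist_le_mul fun u v => ?_
    rw [Real.coe_toNNReal L hL.le, Real.dist_eq, Real.dist_eq, ← mul_sub, abs_mul, abs_of_pos hL]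
  · intro t
    rw [hy, hy, pow_add]
    norm_num
  · rw [hy0, hy1]
    exact hne
  · rintro ⟨l, hl⟩
    have h1 : Filter.Tendsto (fun n => y (n + 1)) Filter.atTop (nhds l) :=
      hl.comp (Filter.tendsto_add_atTop_nat 1)
    have h2 : (fun n => y (n + 1)) = fun n => - y n := by
      funext n
      rw [hy, hy, pow_succ]
      ring
    rw [h2] at h1
    have h3 := tendsto_nhds_unique h1 hl.neg
    have h4 : l = 0 := by linarith
    have h5 := hl.abs
    have h6 : (fun n => |y n|) = fun _ => |a| := by
      funext n
      rw [hy, abs_mul, abs_pow]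
      simp
    rw [h6] at h5
    have h7 := tendsto_nhds_unique h5 tendsto_const_nhds
    rw [h4, abs_zero] at h7
    exact ha (abs_eq_zero.mp h7.symm)
end

section
/- Let L > 0, β ∈ [0, 1], γ = 2(1+β)/L, and a ∈ ℝ with a ≠ 0. Consider f : ℝ → ℝ, f(x) = (L/2)x². Then the heavy-ball sequence defined by x_0 = a, x_1 = −a, and x_{t+1} = x_t + β(x_t − x_{t−1}) − γ f'(x_t) for t ≥ 1 satisfies x_t = (−1)^t a for all t; in particular it is 2-cyclic and non-constant, so heavy-ball with these parameters does not converge on this L-smooth convex function. -/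
/-- For `γ = 2(1+β)/L` on the boundary of the heavy-ball
convergence region, the heavy-ball trajectory on the convex `L`-smooth quadratic
`f(x) = (L/2) x²` started at `x₀ = a`, `x₁ = -a` satisfies `x t = (-1)^t a`:
it is 2-cyclic, non-constant, hence does not converge. -/
theorem heavy_ball_boundary_two_cycle (L β γ a : ℝ) (hL : 0 < L)
    (hβ : β ∈ Set.Icc (0 : ℝ) 1)
    (hγ : γ = 2 * (1 + β) / L) (ha : a ≠ 0)
    (f : ℝ → ℝ) (hf : f = fun x => L / 2 * x ^ 2)
    (x : ℕ → ℝ) (hx0 : x 0 = a) (hx1 : x 1 = -a)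
    (hrec : ∀ t, 1 ≤ t → x (t + 1) =
      x t + β * (x t - x (t - 1)) - γ * deriv f (x t)) :
    ConvexOn ℝ Set.univ f ∧ LipschitzWith (Real.toNNReal L) (deriv f) ∧
      (∀ t, x t = (-1) ^ t * a) ∧ (∀ t, x (t + 2) = x t) ∧
      (∃ s t, x s ≠ x t) ∧ ¬∃ l, Filter.Tendsto x Filter.atTop (nhds l) := by
  have hd : deriv f = fun y => L * y := by
    subst hf
    funext y
    have h := (hasDerivAt_pow 2 y).const_mul (L / 2)
    have h2 : HasDerivAt (fun x : ℝ => L / 2 * x ^ 2) (L * y) y := by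
      have e : L * y = L / 2 * (((2 : ℕ) : ℝ) * y ^ (2 - 1)) := by
        norm_num
        ring
      rw [e]
      exact h
    exact h2.deriv
  have hstep : ∀ t, x t = (-1) ^ t * a ∧ x (t + 1) = (-1) ^ (t + 1) * a := by
    intro t
    induction t with
    | zero => simp [hx0, hx1]
    | succ k ih =>
      refine ⟨ih.2, ?_⟩
      rw [hrec (k + 1) (by omega), hd, Nat.add_sub_cancel, ih.1, ih.2, hγ]
      field_simp
      ring
  have hx : ∀ t, x t = (-1) ^ t * a := fun t => (hstep t).1
  have h2 : ∀ t, x (t + 2) = x t := by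
    intro t
    rw [hx, hx]
    ring
  have hne : a ≠ -a := by
    intro h
    apply ha
    linarith
  refine ⟨?_, ?_, hx, h2, ⟨0, 1, by rw [hx0, hx1]; exact hne⟩, ?_⟩
  · rw [hf]
    have h := (even_two.convexOn_pow (𝕜 := ℝ)).smul (c := L / 2) (by positivity)
    simpa [smul_eq_mul] using h
  · rw [hd]
    refine LipschitzWith.of_dist_le_mul fun y z => ?_
    rw [Real.coe_toNNReal L hL.le, Real.dist_eq, Real.dist_eq, ← mul_sub, abs_mul,
      abs_of_pos hL]
  · rintro ⟨l, hl⟩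
    have h1 := (Filter.tendsto_add_atTop_iff_nat 1).2 hl
    have hneg : (fun n => x (n + 1)) = fun n => -x n := by
      funext n
      rw [hx, hx]
      ring
    rw [hneg] at h1
    have e2 : l = -l := tendsto_nhds_unique h1 hl.neg
    have l0 : l = 0 := by linarith
    have habs : (fun n => |x n|) = fun _ => |a| := by
      funext n
      rw [hx, abs_mul, abs_pow]
      simp
    have h3 := hl.abs
    rw [habs, l0, abs_zero] at h3
    exact ha (abs_eq_zero.1 (tendsto_nhds_unique tendsto_const_nhds h3))
end

section
/- Let L > 0, ε ∈ [0, 1), and γ ≥ 2/(L(1+ε)). Consider f : ℝ → ℝ, f(x) = (L/2)x², and let x_0 ≠ 0. Define d_t = (1+ε)L x_t and x_{t+1} = x_t − γ d_t. Then |d_t − f'(x_t)| ≤ ε|f'(x_t)| for all t (so d_t is an admissible inexact gradient with relative error ε), x_t = (1 − γL(1+ε))^t x_0, and |x_t| ≥ |x_0| > 0 for all t; in particular the inexact gradient descent iterates do not converge to the minimizer 0. -/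
/-- For `γ ≥ 2/(L(1+ε))`, the inexact gradient descent with
oracle `d t = (1+ε) L x t` (an admissible inexact gradient with relative error
`ε`) on `f(x) = (L/2) x²` satisfies `x t = (1 - γL(1+ε))^t x₀` and
`|x t| ≥ |x₀| > 0`, hence the iterates do not converge to the minimizer `0`. -/
theorem inexact_gd_divergence (L ε γ : ℝ) (hL : 0 < L)
    (hε : ε ∈ Set.Ico (0 : ℝ) 1) (hγ : 2 / (L * (1 + ε)) ≤ γ)
    (f : ℝ → ℝ) (hf : f = fun x => L / 2 * x ^ 2)
    (x0 : ℝ) (hx0 : x0 ≠ 0)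
    (d x : ℕ → ℝ) (hinit : x 0 = x0)
    (hd : ∀ t, d t = (1 + ε) * L * x t)
    (hrec : ∀ t, x (t + 1) = x t - γ * d t) :
    (∀ t, |d t - deriv f (x t)| ≤ ε * |deriv f (x t)|) ∧
      (∀ t, x t = (1 - γ * L * (1 + ε)) ^ t * x0) ∧
      (∀ t, |x0| ≤ |x t|) ∧ 0 < |x0| ∧
      ¬Filter.Tendsto x Filter.atTop (nhds 0) := by
  obtain ⟨hε0, hε1⟩ := hε
  have hder : ∀ y, deriv f y = L * y := by
    intro y
    have h : HasDerivAt f (L / 2 * (2 * y)) y := by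
      rw [hf]
      simpa using (hasDerivAt_pow 2 y).const_mul (L / 2)
    rw [h.deriv]
    ring
  have hform : ∀ t, x t = (1 - γ * L * (1 + ε)) ^ t * x0 := by
    intro t
    induction t with
    | zero => simp [hinit]
    | succ k ih =>
      rw [hrec, hd, ih]
      ring
  have hq : 1 ≤ |1 - γ * L * (1 + ε)| := by
    have hpos : 0 < L * (1 + ε) := by positivity
    rw [div_le_iff₀ hpos] at hγ
    rw [le_abs]
    right
    linarith
  have hge : ∀ t, |x0| ≤ |x t| := by
    intro t
    rw [hform t, abs_mul, abs_pow]
    exact le_mul_of_one_le_left (abs_nonneg _) (one_le_pow₀ hq)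
  have hx : 0 < |x0| := abs_pos.mpr hx0
  refine ⟨?_, hform, hge, hx, ?_⟩
  · intro t
    rw [hder, hd]
    have h : (1 + ε) * L * x t - L * x t = ε * (L * x t) := by ring
    rw [h, abs_mul, abs_of_nonneg hε0]
  · intro h
    have h2 := h.abs
    rw [abs_zero] at h2
    exact absurd (ge_of_tendsto' h2 hge) (not_le.mpr hx)
end

section
/- Let L > 0 and let f : ℝ^d → ℝ be convex and differentiable with L-Lipschitz gradient, with a minimizer x_⋆. Let x_{t+1} = x_t − (1/L)∇f(x_t). Then the sequence V_t = t(f(x_t) − f(x_⋆)) + (L/2)‖x_t − x_⋆‖² is non-increasing in t; consequently, for every T ≥ 1, f(x_T) − f(x_⋆) ≤ L‖x_0 − x_⋆‖²/(2T). -/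
open RealInnerProductSpace


lemma aux_line {d : ℕ} (f : EuclideanSpace ℝ (Fin d) → ℝ) (hdiff : Differentiable ℝ f)
    (a v : EuclideanSpace ℝ (Fin d)) (s : ℝ) :
    HasDerivAt (fun s : ℝ => f (a + s • v)) (inner ℝ (gradient f (a + s • v)) v) s := by
  have h1 : HasFDerivAt f _ (a + s • v) := (hdiff (a + s • v)).hasGradientAt.hasFDerivAt
  have h2 : HasDerivAt (fun s : ℝ => a + s • v) v s := by
    simpa using ((hasDerivAt_id s).smul_const v).const_add a
  have h3 := h1.comp_hasDerivAt s h2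
  exact h3

lemma aux_descent {d : ℕ} (L : ℝ) (f : EuclideanSpace ℝ (Fin d) → ℝ)
    (hdiff : Differentiable ℝ f)
    (hlip : ∀ a b, ‖gradient f a - gradient f b‖ ≤ L * ‖a - b‖)
    (a v : EuclideanSpace ℝ (Fin d)) :
    f (a + v) ≤ f a + inner ℝ (gradient f a) v + L / 2 * ‖v‖ ^ 2 := by
  have hd : ∀ s : ℝ, HasDerivAt
      (fun s : ℝ => f (a + s • v) - s * inner ℝ (gradient f a) v - s ^ 2 * (L / 2 * ‖v‖ ^ 2))
      (inner ℝ (gradient f (a + s • v)) v - 1 * inner ℝ (gradient f a) v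
        - (2 * s) * (L / 2 * ‖v‖ ^ 2)) s := by
    intro s
    have h := ((aux_line f hdiff a v s).sub
      ((hasDerivAt_id s).mul_const (inner ℝ (gradient f a) v))).sub
      ((hasDerivAt_pow 2 s).mul_const (L / 2 * ‖v‖ ^ 2))
    convert! h using 1
    simp
  have hanti : AntitoneOn
      (fun s : ℝ => f (a + s • v) - s * inner ℝ (gradient f a) v - s ^ 2 * (L / 2 * ‖v‖ ^ 2))
      (Set.Icc 0 1) := by
    apply antitoneOn_of_deriv_nonpos (convex_Icc 0 1)
    · exact fun s _ => (hd s).continuousAt.continuousWithinAt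
    · exact fun s _ => (hd s).differentiableAt.differentiableWithinAt
    · intro s hs
      rw [interior_Icc] at hs
      rw [(hd s).deriv]
      have h1 := real_inner_le_norm (gradient f (a + s • v) - gradient f a) v
      rw [inner_sub_left] at h1
      have h2 := hlip (a + s • v) a
      rw [add_sub_cancel_left, norm_smul, Real.norm_of_nonneg hs.1.le] at h2
      have h3 := mul_le_mul_of_nonneg_right h2 (norm_nonneg v)
      nlinarith
  have h := hanti (Set.left_mem_Icc.2 zero_le_one) (Set.right_mem_Icc.2 zero_le_one) zero_le_one
  simp only [zero_smul, one_smul, add_zero] at h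
  linarith

lemma aux_convex {d : ℕ} (f : EuclideanSpace ℝ (Fin d) → ℝ)
    (hconv : ConvexOn ℝ Set.univ f) (hdiff : Differentiable ℝ f)
    (a b : EuclideanSpace ℝ (Fin d)) :
    f a + inner ℝ (gradient f a) (b - a) ≤ f b := by
  have hc : ConvexOn ℝ Set.univ (fun s : ℝ => f (a + s • (b - a))) := by
    refine ⟨convex_univ, fun s _ t _ p q hp hq hpq => ?_⟩
    have h := hconv.2 (Set.mem_univ (a + s • (b - a))) (Set.mem_univ (a + t • (b - a))) hp hq hpq
    have e : a + (p • s + q • t) • (b - a)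
        = p • (a + s • (b - a)) + q • (a + t • (b - a)) := by
      have : q = 1 - p := by linarith
      subst this
      simp only [smul_eq_mul]
      module
    simp only [e]
    exact h
  have h := hc.le_slope_of_hasDerivAt (Set.mem_univ 0) (Set.mem_univ 1) zero_lt_one
    (aux_line f hdiff a (b - a) 0)
  simp only [slope_def_field, zero_smul, one_smul, add_zero, sub_zero, div_one, add_sub_cancel] at h
  linarith

/-- For gradient descent with step-size `1/L` on a convex
`L`-smooth function `f` with minimizer `x⋆`, the Lyapunov sequence
`V t = t (f (x t) - f x⋆) + (L/2) ‖x t - x⋆‖²` is non-increasing; consequently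
`f (x T) - f x⋆ ≤ L ‖x 0 - x⋆‖² / (2T)` for all `T ≥ 1`. -/
theorem gd_lyapunov_decrease {d : ℕ} (L : ℝ) (hL : 0 < L)
    (f : EuclideanSpace ℝ (Fin d) → ℝ)
    (hconv : ConvexOn ℝ Set.univ f) (hdiff : Differentiable ℝ f)
    (hlip : ∀ a b, ‖gradient f a - gradient f b‖ ≤ L * ‖a - b‖)
    (xstar : EuclideanSpace ℝ (Fin d)) (hstar : ∀ z, f xstar ≤ f z)
    (x : ℕ → EuclideanSpace ℝ (Fin d))
    (hrec : ∀ t, x (t + 1) = x t - (1 / L) • gradient f (x t)) :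
    (∀ t : ℕ,
      ((t : ℝ) + 1) * (f (x (t + 1)) - f xstar) + L / 2 * ‖x (t + 1) - xstar‖ ^ 2 ≤
        (t : ℝ) * (f (x t) - f xstar) + L / 2 * ‖x t - xstar‖ ^ 2) ∧
      ∀ T : ℕ, 1 ≤ T →
        f (x T) - f xstar ≤ L * ‖x 0 - xstar‖ ^ 2 / (2 * (T : ℝ)) := by
  have key : ∀ t : ℕ,
      ((t : ℝ) + 1) * (f (x (t + 1)) - f xstar) + L / 2 * ‖x (t + 1) - xstar‖ ^ 2 ≤
        (t : ℝ) * (f (x t) - f xstar) + L / 2 * ‖x t - xstar‖ ^ 2 := by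
    intro t
    have h1 := aux_descent L f hdiff hlip (x t) (-((1 / L) • gradient f (x t)))
    rw [← sub_eq_add_neg, ← hrec t, norm_neg, norm_smul, inner_neg_right, inner_smul_right,
      real_inner_self_eq_norm_sq, Real.norm_of_nonneg (by positivity)] at h1
    have h2 := aux_convex f hconv hdiff (x t) xstar
    rw [← neg_sub, inner_neg_right] at h2
    have h3 : ‖x (t + 1) - xstar‖ ^ 2 = ‖x t - xstar‖ ^ 2
        - 2 * (1 / L * inner ℝ (gradient f (x t)) (x t - xstar))
        + (1 / L * ‖gradient f (x t)‖) ^ 2 := by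
      rw [hrec t, sub_right_comm, norm_sub_sq_real, inner_smul_right, norm_smul,
        Real.norm_of_nonneg (by positivity : 0 ≤ 1 / L), real_inner_comm]
    have h4 : L / 2 * ‖x (t + 1) - xstar‖ ^ 2 = L / 2 * ‖x t - xstar‖ ^ 2
        - inner ℝ (gradient f (x t)) (x t - xstar) + ‖gradient f (x t)‖ ^ 2 / (2 * L) := by
      rw [h3]; field_simp
    have h5 : f (x (t + 1)) ≤ f (x t) - ‖gradient f (x t)‖ ^ 2 / (2 * L) := by
      refine h1.trans (le_of_eq ?_)
      field_simp
      ring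
    have h6 : 0 ≤ ‖gradient f (x t)‖ ^ 2 / (2 * L) := by positivity
    have h7 : (t : ℝ) * f (x (t + 1)) ≤ t * f (x t) :=
      mul_le_mul_of_nonneg_left (by linarith) (Nat.cast_nonneg t)
    rw [h4]
    linarith
  refine ⟨key, fun T hT => ?_⟩
  have hV : ∀ t : ℕ, (t : ℝ) * (f (x t) - f xstar) + L / 2 * ‖x t - xstar‖ ^ 2
      ≤ L / 2 * ‖x 0 - xstar‖ ^ 2 := by
    intro t
    induction t with
    | zero => simp
    | succ k ih =>
      push_cast
      exact (key k).trans ih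
  have hT' : (0 : ℝ) < T := by exact_mod_cast hT
  have h := hV T
  have h0 : 0 ≤ L / 2 * ‖x T - xstar‖ ^ 2 := by positivity
  rw [le_div_iff₀ (by positivity)]
  linarith
end

section
/- For every ρ ∈ (0, 4], the function f_ρ is differentiable on ℝ and, for every x ∈ [0, 1], f_ρ'(x) = ρx² + (1−ρ)x; consequently, the gradient-descent map with step-size 1 satisfies x − f_ρ'(x) = ρx(1−x) for all x ∈ [0, 1], i.e. it coincides with the logistic map on [0, 1]. -/
/-- The piecewise function `f_ρ` from the paper's discussion of the logistic map
embedded in gradient descent with step-size 1. -/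
noncomputable def frho (ρ : ℝ) (x : ℝ) : ℝ :=
  if |x| ≤ 1 then
    ρ / 3 * |x| ^ 3 + (1 - ρ) / 2 * x ^ 2 + (ρ - 1) ^ 3 / (6 * ρ ^ 2)
  else if |x| ≤ 3 / 2 then
    -(ρ / 3) * |x| ^ 3 + (1 + 3 * ρ) / 2 * x ^ 2 - 2 * ρ * |x| +
      ((ρ - 1) ^ 3 + 4 * ρ ^ 3) / (6 * ρ ^ 2)
  else
    1 / 2 * x ^ 2 + ρ / 4 * |x| + (4 * (ρ - 1) ^ 3 - 11 * ρ ^ 3) / (24 * ρ ^ 2)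

/-- positive part cubed -/
noncomputable def pcube (y : ℝ) : ℝ := (max y 0) ^ 3

theorem pcube_hasDerivAt (y : ℝ) : HasDerivAt pcube (3 * (max y 0) ^ 2) y := by
  rcases lt_trichotomy y 0 with h | h | h
  · rw [max_eq_right h.le]
    have : HasDerivAt (fun _ : ℝ => (0 : ℝ)) (3 * 0 ^ 2) y := by
      simpa using hasDerivAt_const y (0 : ℝ)
    refine this.congr_of_eventuallyEq ?_
    filter_upwards [Iio_mem_nhds h] with z hz
    simp [pcube, max_eq_right (le_of_lt (Set.mem_Iio.mp hz))]
  · subst h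
    have hO : pcube =O[nhds 0] fun x : ℝ => ‖x - 0‖ ^ 3 := by
      refine Asymptotics.IsBigO.of_bound 1 (Filter.Eventually.of_forall fun z => ?_)
      simp only [pcube, sub_zero, norm_pow, Real.norm_eq_abs, abs_abs, one_mul]
      refine pow_le_pow_left₀ (abs_nonneg _) ?_ 3
      rw [abs_of_nonneg (le_max_right z 0)]
      exact max_le (le_abs_self z) (abs_nonneg z)
    have := (hO.hasFDerivAt (𝕜 := ℝ) (by norm_num)).hasDerivAt
    simpa using this
  · rw [max_eq_left h.le]
    have : HasDerivAt (fun z : ℝ => z ^ 3) (3 * y ^ 2) y := by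
      simpa using hasDerivAt_pow 3 y
    refine this.congr_of_eventuallyEq ?_
    filter_upwards [Ioi_mem_nhds h] with z hz
    simp [pcube, max_eq_left (le_of_lt (Set.mem_Ioi.mp hz))]

theorem pcube_pos {y : ℝ} (h : 0 ≤ y) : pcube y = y ^ 3 := by simp [pcube, h]
theorem pcube_neg {y : ℝ} (h : y ≤ 0) : pcube y = 0 := by simp [pcube, h]

theorem frho_eq (ρ : ℝ) (hρ : 0 < ρ) (x : ℝ) : frho ρ x =
    ρ / 3 * (pcube x + pcube (-x)) + (1 - ρ) / 2 * x ^ 2 + (ρ - 1) ^ 3 / (6 * ρ ^ 2)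
      - 2 * ρ / 3 * (pcube (x - 1) + pcube (-x - 1))
      + ρ / 3 * (pcube (x - 3 / 2) + pcube (-x - 3 / 2)) := by
  unfold frho
  rcases le_total 0 x with hx | hx
  · rw [abs_of_nonneg hx, pcube_pos hx, pcube_neg (y := -x) (by linarith),
      pcube_neg (y := -x - 1) (by linarith), pcube_neg (y := -x - 3 / 2) (by linarith)]
    split_ifs with h1 h2
    · rw [pcube_neg (by linarith), pcube_neg (by linarith)]; ring
    · rw [pcube_pos (by linarith), pcube_neg (by linarith)]; field_simp; ring
    · rw [pcube_pos (by linarith), pcube_pos (by linarith)]; field_simp; ring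
  · rw [abs_of_nonpos hx, pcube_neg hx, pcube_pos (y := -x) (by linarith),
      pcube_neg (y := x - 1) (by linarith), pcube_neg (y := x - 3 / 2) (by linarith)]
    split_ifs with h1 h2
    · rw [pcube_neg (by linarith), pcube_neg (by linarith)]; ring
    · rw [pcube_pos (by linarith), pcube_neg (by linarith)]; field_simp; ring
    · rw [pcube_pos (by linarith), pcube_pos (by linarith)]; field_simp; ring

theorem pair_hasDerivAt (c x : ℝ) : HasDerivAt (fun z => pcube (z - c) + pcube (-z - c))
    (3 * (max (x - c) 0) ^ 2 - 3 * (max (-x - c) 0) ^ 2) x := by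
  have h1 := (pcube_hasDerivAt (x - c)).comp x ((hasDerivAt_id x).sub_const c)
  have h2 := (pcube_hasDerivAt (-x - c)).comp x ((hasDerivAt_id x).neg.sub_const c)
  refine (h1.add h2).congr_deriv ?_
  ring

theorem frho_hasDerivAt (ρ : ℝ) (hρ : 0 < ρ) (x : ℝ) : HasDerivAt (frho ρ)
    (ρ / 3 * (3 * (max (x - 0) 0) ^ 2 - 3 * (max (-x - 0) 0) ^ 2) + (1 - ρ) / 2 * (2 * x)
      - 2 * ρ / 3 * (3 * (max (x - 1) 0) ^ 2 - 3 * (max (-x - 1) 0) ^ 2)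
      + ρ / 3 * (3 * (max (x - 3 / 2) 0) ^ 2 - 3 * (max (-x - 3 / 2) 0) ^ 2)) x := by
  have hs : HasDerivAt (fun z : ℝ => z ^ 2) (2 * x) x := by simpa using hasDerivAt_pow 2 x
  have h := (((((pair_hasDerivAt 0 x).const_mul (ρ / 3)).add
    (hs.const_mul ((1 - ρ) / 2))).add_const ((ρ - 1) ^ 3 / (6 * ρ ^ 2))).sub
    ((pair_hasDerivAt 1 x).const_mul (2 * ρ / 3))).add
    ((pair_hasDerivAt (3 / 2) x).const_mul (ρ / 3))
  refine h.congr_of_eventuallyEq (Filter.Eventually.of_forall fun z => ?_)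
  rw [frho_eq ρ hρ z]
  simp

/-- For every `ρ ∈ (0, 4]`, `f_ρ` is differentiable and on
`[0, 1]` its derivative is `ρ x² + (1 - ρ) x`; hence the gradient-descent map
with step-size 1 coincides with the logistic map `x ↦ ρ x (1 - x)` on `[0, 1]`. -/
theorem frho_deriv_logistic (ρ : ℝ) (hρ : ρ ∈ Set.Ioc (0 : ℝ) 4) :
    Differentiable ℝ (frho ρ) ∧
      ∀ x ∈ Set.Icc (0 : ℝ) 1,
        deriv (frho ρ) x = ρ * x ^ 2 + (1 - ρ) * x ∧
          x - deriv (frho ρ) x = ρ * x * (1 - x) := by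
  refine ⟨fun x => (frho_hasDerivAt ρ hρ.1 x).differentiableAt, ?_⟩
  rintro x ⟨h0, h1⟩
  have hd : deriv (frho ρ) x = ρ * x ^ 2 + (1 - ρ) * x := by
    rw [(frho_hasDerivAt ρ hρ.1 x).deriv, max_eq_left (a := x - 0) (by linarith),
      max_eq_right (a := -x - 0) (by linarith), max_eq_right (a := x - 1) (by linarith),
      max_eq_right (a := -x - 1) (by linarith), max_eq_right (a := x - 3 / 2) (by linarith),
      max_eq_right (a := -x - 3 / 2) (by linarith)]
    ring
  refine ⟨hd, ?_⟩
  rw [hd]; ring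
end

section
/- For every ρ ∈ (0, 4], the intervals [0, 1] and [−1, 0] are stable under the gradient-descent map with step-size 1 for f_ρ: if x ∈ [0, 1] then x − f_ρ'(x) ∈ [0, 1], and if x ∈ [−1, 0] then x − f_ρ'(x) ∈ [−1, 0]. -/
theorem frho_deriv_neg (ρ x : ℝ) : deriv (frho ρ) (-x) = - deriv (frho ρ) x := by
  have h : (fun y => frho ρ (-y)) = frho ρ := by
    funext y
    simp [frho]
  have h2 := deriv_comp_neg (frho ρ) x
  rw [h] at h2
  linarith

theorem frho_hasDeriv_poly (a b c d x : ℝ) :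
    HasDerivAt (fun y : ℝ => a * y ^ 3 + b * y ^ 2 + c * y + d)
      (3 * a * x ^ 2 + 2 * b * x + c) x := by
  have h := ((((hasDerivAt_pow 3 x).const_mul a).add ((hasDerivAt_pow 2 x).const_mul b)).add
    ((hasDerivAt_id x).const_mul c)).add_const d
  refine h.congr_deriv ?_
  norm_num
  ring

theorem frho_deriv_pos (ρ x : ℝ) (hρ : 0 < ρ) (h0 : 0 ≤ x) (h1 : x ≤ 1) :
    deriv (frho ρ) x = ρ * x ^ 2 + (1 - ρ) * x := by
  rcases h0.eq_or_lt with rfl | h0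
  · have := frho_deriv_neg ρ 0
    rw [neg_zero] at this
    linarith
  have A := frho_hasDeriv_poly (ρ / 3) ((1 - ρ) / 2) 0 ((ρ - 1) ^ 3 / (6 * ρ ^ 2)) x
  have eA : ∀ y : ℝ, 0 < y → y ≤ 1 → frho ρ y =
      ρ / 3 * y ^ 3 + (1 - ρ) / 2 * y ^ 2 + 0 * y + (ρ - 1) ^ 3 / (6 * ρ ^ 2) := by
    intro y hy hy1
    simp [frho, abs_of_pos hy, hy1]
  rcases h1.eq_or_lt with rfl | h1
  · have B := frho_hasDeriv_poly (-(ρ / 3)) ((1 + 3 * ρ) / 2) (-2 * ρ)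
      (((ρ - 1) ^ 3 + 4 * ρ ^ 3) / (6 * ρ ^ 2)) 1
    have eB : ∀ y : ℝ, 1 ≤ y → y ≤ 3 / 2 → frho ρ y =
        -(ρ / 3) * y ^ 3 + (1 + 3 * ρ) / 2 * y ^ 2 + (-2 * ρ) * y +
          ((ρ - 1) ^ 3 + 4 * ρ ^ 3) / (6 * ρ ^ 2) := by
      intro y hy hy1
      rcases hy.eq_or_lt with rfl | hy
      · rw [eA 1 one_pos le_rfl]
        field_simp
        ring
      · have : 0 < y := by linarith
        simp only [frho, abs_of_pos this, hy.not_ge, hy1, if_true, if_false]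
        ring
    have A' : HasDerivWithinAt (frho ρ) 1 (Set.Iic 1) 1 := by
      refine (A.hasDerivWithinAt.congr_of_eventuallyEq ?_ (eA 1 one_pos le_rfl)).congr_deriv
        (by ring)
      filter_upwards [self_mem_nhdsWithin, mem_nhdsWithin_of_mem_nhds (Ioi_mem_nhds h0)] with y a b
      exact eA y b a
    have B' : HasDerivWithinAt (frho ρ) 1 (Set.Ici 1) 1 := by
      refine (B.hasDerivWithinAt.congr_of_eventuallyEq ?_
        (eB 1 le_rfl (by norm_num))).congr_deriv (by ring)
      filter_upwards [self_mem_nhdsWithin, mem_nhdsWithin_of_mem_nhds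
        (Iic_mem_nhds (show (1:ℝ) < 3 / 2 by norm_num))] with y a b
      exact eB y a b
    have C := A'.union B'
    rw [Set.Iic_union_Ici, hasDerivWithinAt_univ] at C
    rw [C.deriv]
    ring
  · have : frho ρ =ᶠ[nhds x] fun y =>
        ρ / 3 * y ^ 3 + (1 - ρ) / 2 * y ^ 2 + 0 * y + (ρ - 1) ^ 3 / (6 * ρ ^ 2) := by
      filter_upwards [Ioi_mem_nhds h0, Iio_mem_nhds h1] with y a b
      exact eA y a (le_of_lt b)
    rw [(A.congr_of_eventuallyEq this).deriv]
    ring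

/-- For every `ρ ∈ (0, 4]`, the intervals `[0, 1]` and
`[-1, 0]` are stable under the gradient-descent map with step-size 1 for `f_ρ`. -/
theorem frho_gd_interval_stable (ρ : ℝ) (hρ : ρ ∈ Set.Ioc (0 : ℝ) 4) :
    (∀ x ∈ Set.Icc (0 : ℝ) 1, x - deriv (frho ρ) x ∈ Set.Icc (0 : ℝ) 1) ∧
      (∀ x ∈ Set.Icc (-1 : ℝ) 0, x - deriv (frho ρ) x ∈ Set.Icc (-1 : ℝ) 0) := by
  obtain ⟨hp, h4⟩ := hρ
  have key : ∀ x ∈ Set.Icc (0 : ℝ) 1, x - deriv (frho ρ) x ∈ Set.Icc (0 : ℝ) 1 := by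
    rintro x ⟨h0, h1⟩
    rw [frho_deriv_pos ρ x hp h0 h1]
    have e : x - (ρ * x ^ 2 + (1 - ρ) * x) = ρ * (x * (1 - x)) := by ring
    have hx : 0 ≤ x * (1 - x) := mul_nonneg h0 (by linarith)
    rw [e]
    refine ⟨mul_nonneg hp.le hx, ?_⟩
    nlinarith [mul_le_mul_of_nonneg_right h4 hx, sq_nonneg (2 * x - 1)]
  refine ⟨key, ?_⟩
  rintro x ⟨h0, h1⟩
  obtain ⟨a, b⟩ := key (-x) ⟨by linarith, by linarith⟩
  rw [frho_deriv_neg] at a b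
  constructor <;> linarith
end

section
/- For every ρ ∈ (0, 4]: if x > 1 then x − f_ρ'(x) ∈ [−1, 0], and if x < −1 then x − f_ρ'(x) ∈ [0, 1]; i.e. one step of gradient descent with step-size 1 on f_ρ maps (1, ∞) into [−1, 0] and (−∞, −1) into [0, 1]. -/
lemma frho_mid (ρ : ℝ) (hρ : 0 < ρ) (x : ℝ) (h1 : 1 < x) (h2 : x ≤ 3 / 2) :
    frho ρ x = -(ρ / 3) * x ^ 3 + (1 + 3 * ρ) / 2 * x ^ 2 - 2 * ρ * x +
      ((ρ - 1) ^ 3 + 4 * ρ ^ 3) / (6 * ρ ^ 2) := by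
  have : |x| = x := abs_of_pos (by linarith)
  rw [frho, this, if_neg (by linarith), if_pos h2]

lemma frho_out (ρ : ℝ) (hρ : 0 < ρ) (x : ℝ) (h2 : 3 / 2 ≤ x) :
    frho ρ x = 1 / 2 * x ^ 2 + ρ / 4 * x
      + (4 * (ρ - 1) ^ 3 - 11 * ρ ^ 3) / (24 * ρ ^ 2) := by
  rcases h2.eq_or_lt with h | h
  · rw [frho_mid ρ hρ x (by linarith) h.ge, ← h]
    field_simp
    ring
  · have : |x| = x := abs_of_pos (by linarith)
    rw [frho, this, if_neg (by linarith), if_neg (by linarith)]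

lemma mid_deriv (ρ c x : ℝ) :
    HasDerivAt (fun x : ℝ => -(ρ / 3) * x ^ 3 + (1 + 3 * ρ) / 2 * x ^ 2 - 2 * ρ * x + c)
      (-ρ * x ^ 2 + (1 + 3 * ρ) * x - 2 * ρ) x := by
  have := ((((hasDerivAt_pow 3 x).const_mul (-(ρ / 3))).add
    ((hasDerivAt_pow 2 x).const_mul ((1 + 3 * ρ) / 2))).sub
    ((hasDerivAt_id x).const_mul (2 * ρ))).add_const c
  refine this.congr_deriv ?_
  push_cast
  ring

lemma out_deriv (ρ c x : ℝ) :
    HasDerivAt (fun x : ℝ => 1 / 2 * x ^ 2 + ρ / 4 * x + c) (x + ρ / 4) x := by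
  have := (((hasDerivAt_pow 2 x).const_mul (1 / 2)).add
    ((hasDerivAt_id x).const_mul (ρ / 4))).add_const c
  refine this.congr_deriv ?_
  push_cast
  ring

lemma frho_step_pos (ρ : ℝ) (hρ : ρ ∈ Set.Ioc (0 : ℝ) 4) (x : ℝ) (hx : 1 < x) :
    x - deriv (frho ρ) x ∈ Set.Icc (-1 : ℝ) 0 := by
  obtain ⟨h0, h4⟩ := hρ
  rcases lt_trichotomy x (3 / 2) with h | h | h
  · have hd := (mid_deriv ρ (((ρ - 1) ^ 3 + 4 * ρ ^ 3) / (6 * ρ ^ 2)) x).congr_of_eventuallyEq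
      (f₁ := frho ρ) (by
        filter_upwards [Ioo_mem_nhds hx h] with y hy
        exact frho_mid ρ h0 y hy.1 hy.2.le)
    rw [hd.deriv]
    constructor
    · nlinarith [mul_nonneg h0.le (sq_nonneg (x - 3 / 2))]
    · nlinarith [mul_nonneg h0.le (mul_nonneg (sub_nonneg.2 hx.le) (by linarith : 0 ≤ 2 - x))]
  · have e : (-ρ * x ^ 2 + (1 + 3 * ρ) * x - 2 * ρ) = x + ρ / 4 := by rw [h]; ring
    have m := mid_deriv ρ (((ρ - 1) ^ 3 + 4 * ρ ^ 3) / (6 * ρ ^ 2)) x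
    rw [e] at m
    have hl : HasDerivWithinAt (frho ρ) (x + ρ / 4) (Set.Ioc 1 x) x :=
      m.hasDerivWithinAt.congr (fun y hy => frho_mid ρ h0 y hy.1 (hy.2.trans h.le))
        (frho_mid ρ h0 x hx h.le)
    have hr : HasDerivWithinAt (frho ρ) (x + ρ / 4) (Set.Ici x) x :=
      (out_deriv ρ _ x).hasDerivWithinAt.congr
        (fun y hy => frho_out ρ h0 y (h.ge.trans hy)) (frho_out ρ h0 x h.ge)
    have hd : HasDerivAt (frho ρ) (x + ρ / 4) x := (hl.union hr).hasDerivAt (by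
      rw [Set.Ioc_union_Ici_eq_Ioi hx]
      exact Ioi_mem_nhds hx)
    rw [hd.deriv]
    constructor <;> linarith
  · have hd := (out_deriv ρ ((4 * (ρ - 1) ^ 3 - 11 * ρ ^ 3) / (24 * ρ ^ 2)) x).congr_of_eventuallyEq
      (f₁ := frho ρ) (by
        filter_upwards [Ioi_mem_nhds h] with y hy
        exact frho_out ρ h0 y (le_of_lt hy))
    rw [hd.deriv]
    constructor <;> linarith

/-- For every `ρ ∈ (0, 4]`, one step of gradient descent with
step-size 1 on `f_ρ` maps `(1, ∞)` into `[-1, 0]` and `(-∞, -1)` into `[0, 1]`. -/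
theorem frho_gd_outer_step (ρ : ℝ) (hρ : ρ ∈ Set.Ioc (0 : ℝ) 4) :
    (∀ x : ℝ, 1 < x → x - deriv (frho ρ) x ∈ Set.Icc (-1 : ℝ) 0) ∧
      (∀ x : ℝ, x < -1 → x - deriv (frho ρ) x ∈ Set.Icc (0 : ℝ) 1) := by
  refine ⟨frho_step_pos ρ hρ, fun x hx => ?_⟩
  have he : (fun y => frho ρ (-y)) = frho ρ := by
    funext y
    simp [frho]
  have hd : deriv (frho ρ) x = -deriv (frho ρ) (-x) := by
    conv_lhs => rw [← he]
    exact deriv_comp_neg (frho ρ) x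
  have := frho_step_pos ρ hρ (-x) (by linarith)
  rw [hd]
  constructor
  · linarith [this.2]
  · linarith [this.1]
end

section
/- Let ρ ∈ (3, 4] and define p_± = ((ρ+1) ± √((ρ−3)(ρ+1)))/(2ρ). Then p_+, p_− ∈ [0, 1], p_+ ≠ p_−, and the logistic map g(x) = ρx(1−x) satisfies g(p_+) = p_− and g(p_−) = p_+. Consequently, gradient descent with step-size 1 on f_ρ started at x_0 = p_+ produces the non-constant 2-cyclic sequence p_+, p_−, p_+, p_−, …, so it does not converge. -/
theorem frho_deriv_aux (ρ y : ℝ) (h0 : 0 < y) (h1 : y < 1) :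
    deriv (frho ρ) y = ρ * y ^ 2 + (1 - ρ) * y := by
  have he : frho ρ =ᶠ[nhds y] fun z =>
      ρ / 3 * z ^ 3 + (1 - ρ) / 2 * z ^ 2 + (ρ - 1) ^ 3 / (6 * ρ ^ 2) := by
    filter_upwards [Ioo_mem_nhds h0 h1] with z hz
    have : |z| = z := abs_of_pos hz.1
    simp only [frho, this, if_pos hz.2.le]
  rw [he.deriv_eq]
  have h := ((((hasDerivAt_id y).pow 3).const_mul (ρ / 3)).add
    (((hasDerivAt_id y).pow 2).const_mul ((1 - ρ) / 2))).add_const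
      ((ρ - 1) ^ 3 / (6 * ρ ^ 2))
  refine (HasDerivAt.deriv (h.congr_deriv ?_))
  simp
  ring

/-- For `ρ ∈ (3, 4]`, the points
`p± = ((ρ+1) ± √((ρ-3)(ρ+1))) / (2ρ)` lie in `[0, 1]`, are distinct, and are
swapped by the logistic map `x ↦ ρ x (1 - x)`. Consequently gradient descent
with step-size 1 on `f_ρ` started at `p₊` is 2-cyclic, non-constant, and does
not converge. -/
theorem frho_gd_two_cycle (ρ : ℝ) (hρ : ρ ∈ Set.Ioc (3 : ℝ) 4)
    (pplus pminus : ℝ)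
    (hp : pplus = ((ρ + 1) + Real.sqrt ((ρ - 3) * (ρ + 1))) / (2 * ρ))
    (hm : pminus = ((ρ + 1) - Real.sqrt ((ρ - 3) * (ρ + 1))) / (2 * ρ))
    (x : ℕ → ℝ) (hx0 : x 0 = pplus)
    (hrec : ∀ t, x (t + 1) = x t - deriv (frho ρ) (x t)) :
    pplus ∈ Set.Icc (0 : ℝ) 1 ∧ pminus ∈ Set.Icc (0 : ℝ) 1 ∧ pplus ≠ pminus ∧
      ρ * pplus * (1 - pplus) = pminus ∧ ρ * pminus * (1 - pminus) = pplus ∧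
      (∀ t, x (t + 2) = x t) ∧
      (∀ t, x (2 * t) = pplus ∧ x (2 * t + 1) = pminus) ∧
      (∃ s t, x s ≠ x t) ∧ ¬∃ l, Filter.Tendsto x Filter.atTop (nhds l) := by
  obtain ⟨h3, h4⟩ := hρ
  set s := Real.sqrt ((ρ - 3) * (ρ + 1)) with hs
  have hpos : 0 < (ρ - 3) * (ρ + 1) := mul_pos (by linarith) (by linarith)
  have hs0 : 0 < s := Real.sqrt_pos.mpr hpos
  have hs2 : s ^ 2 = (ρ - 3) * (ρ + 1) := Real.sq_sqrt hpos.le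
  have hs1 : s < ρ - 1 := by nlinarith
  have hr : 0 < 2 * ρ := by linarith
  have hr0 : ρ ≠ 0 := by linarith
  have a1 : 0 < pplus := by rw [hp]; apply div_pos <;> linarith
  have a2 : pplus < 1 := by rw [hp, div_lt_one hr]; linarith
  have b1 : 0 < pminus := by rw [hm]; apply div_pos <;> linarith
  have b2 : pminus < 1 := by rw [hm, div_lt_one hr]; linarith
  have hne : pplus ≠ pminus := by
    have : pminus < pplus := by
      rw [hm, hp]
      exact div_lt_div_of_pos_right (by linarith) hr
    exact this.ne'
  have g1 : ρ * pplus * (1 - pplus) = pminus := by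
    rw [hp, hm]; field_simp; linear_combination (-1) * hs2
  have g2 : ρ * pminus * (1 - pminus) = pplus := by
    rw [hp, hm]; field_simp; linear_combination (-1) * hs2
  have st1 : ∀ t, x t = pplus → x (t + 1) = pminus := by
    intro t ht
    rw [hrec, ht, frho_deriv_aux ρ _ a1 a2]; linear_combination g1
  have st2 : ∀ t, x t = pminus → x (t + 1) = pplus := by
    intro t ht
    rw [hrec, ht, frho_deriv_aux ρ _ b1 b2]; linear_combination g2
  have ev : ∀ t, x (2 * t) = pplus := by
    intro t
    induction t with
    | zero => simpa using hx0
    | succ k ih => exact st2 _ (st1 _ ih)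
  have od : ∀ t, x (2 * t + 1) = pminus := fun t => st1 _ (ev t)
  refine ⟨⟨a1.le, a2.le⟩, ⟨b1.le, b2.le⟩, hne, g1, g2, ?_, fun t => ⟨ev t, od t⟩,
    ⟨0, 1, ?_⟩, ?_⟩
  · intro t
    rcases Nat.even_or_odd' t with ⟨k, rfl | rfl⟩
    · rw [ev k]; exact ev (k + 1)
    · rw [od k]; exact od (k + 1)
  · rw [hx0, st1 0 hx0]; exact hne
  · rintro ⟨l, hl⟩
    have t1 : Filter.Tendsto (fun t : ℕ => 2 * t) Filter.atTop Filter.atTop :=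
      Filter.tendsto_atTop_mono (fun t => by simp only [id]; omega) Filter.tendsto_id
    have t2 : Filter.Tendsto (fun t : ℕ => 2 * t + 1) Filter.atTop Filter.atTop :=
      Filter.tendsto_atTop_mono (fun t => by simp only [id]; omega) Filter.tendsto_id
    have e1 := hl.comp t1
    have e2 := hl.comp t2
    have f1 : x ∘ (fun t : ℕ => 2 * t) = fun _ => pplus := funext ev
    have f2 : x ∘ (fun t : ℕ => 2 * t + 1) = fun _ => pminus := funext od
    rw [f1] at e1
    rw [f2] at e2
    exact hne ((tendsto_nhds_unique tendsto_const_nhds e1).trans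
      (tendsto_nhds_unique tendsto_const_nhds e2).symm)
end

section
/- Let γ = (2/(√25 + √1))² = 1/9 and β = ((√25 − √1)/(√25 + √1))² = 4/9. There exist a function f : ℝ → ℝ that is 1-strongly convex and 25-smooth, and initial points x_0, x_1 ∈ ℝ, such that the heavy-ball sequence x_{t+1} = x_t + β(x_t − x_{t−1}) − γ f'(x_t) is 3-cyclic and non-constant (x_{t+3} = x_t for all t and the sequence is not constant); in particular heavy-ball with these parameters fails to converge on this function. -/
theorem hb_aux (z : ℝ) : HasDerivAt (fun z : ℝ => z * |z|) (2 * |z|) z := by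
  rcases lt_trichotomy z 0 with h | h | h
  · have := (hasDerivAt_id z).mul (hasDerivAt_abs_neg h)
    refine this.congr_deriv ?_
    simp [abs_of_neg h]; ring
  · subst h
    rw [hasDerivAt_iff_tendsto_slope_zero]
    have : Filter.Tendsto (fun t : ℝ => |t|) (nhdsWithin 0 {0}ᶜ) (nhds (2 * |0|)) := by
      have h := (continuous_abs (G := ℝ)).tendsto 0
      simp only [abs_zero, mul_zero] at h ⊢
      exact h.mono_left nhdsWithin_le_nhds
    refine this.congr' ?_
    filter_upwards [self_mem_nhdsWithin] with t ht
    have : t ≠ 0 := ht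
    simp [this]
  · have := (hasDerivAt_id z).mul (hasDerivAt_abs_pos h)
    refine this.congr_deriv ?_
    simp [abs_of_pos h]; ring

theorem hb_f (z : ℝ) : HasDerivAt (fun z : ℝ => 14 * z + 63 / 8 * z ^ 2 - 35 / 8 * (z * |z|))
    (14 + 63 / 4 * z - 35 / 4 * |z|) z := by
  have := (((hasDerivAt_id z).const_mul 14).add (((hasDerivAt_pow 2 z)).const_mul (63 / 8))).sub
    ((hb_aux z).const_mul (35 / 8))
  refine this.congr_deriv ?_
  norm_num; ring

theorem hb_h (z : ℝ) : HasDerivAt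
    (fun z : ℝ => (14 * z + 63 / 8 * z ^ 2 - 35 / 8 * (z * |z|)) - 1 / 2 * z ^ 2)
    (14 + 63 / 4 * z - 35 / 4 * |z| - z) z := by
  have := (hb_f z).sub ((hasDerivAt_pow 2 z).const_mul (1 / 2))
  refine this.congr_deriv ?_
  norm_num; ring


/-- (Lessard et al.'s counterexample.) With
`γ = (2/(√25 + √1))² = 1/9` and `β = ((√25 - √1)/(√25 + √1))² = 4/9`, there
exist a `1`-strongly convex, `25`-smooth function `f : ℝ → ℝ` and initial
points such that the heavy-ball trajectory is 3-cyclic and non-constant; in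
particular it fails to converge. -/
theorem heavy_ball_three_cycle (γ β : ℝ)
    (hγ : γ = (2 / (Real.sqrt 25 + Real.sqrt 1)) ^ 2)
    (hβ : β = ((Real.sqrt 25 - Real.sqrt 1) / (Real.sqrt 25 + Real.sqrt 1)) ^ 2) :
    ∃ (f : ℝ → ℝ) (x : ℕ → ℝ),
      Differentiable ℝ f ∧
      ConvexOn ℝ Set.univ (fun z => f z - 1 / 2 * z ^ 2) ∧
      LipschitzWith 25 (deriv f) ∧
      (∀ t, 1 ≤ t → x (t + 1) = x t + β * (x t - x (t - 1)) - γ * deriv f (x t)) ∧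
      (∀ t, x (t + 3) = x t) ∧
      (∃ s t, x s ≠ x t) ∧
      ¬∃ l, Filter.Tendsto x Filter.atTop (nhds l) := by
  have h25 : Real.sqrt 25 = 5 := by
    rw [show (25 : ℝ) = 5 ^ 2 by norm_num]; exact Real.sqrt_sq (by norm_num)
  rw [h25, Real.sqrt_one] at hγ hβ
  norm_num at hγ hβ
  have hd : deriv (fun z : ℝ => 14 * z + 63 / 8 * z ^ 2 - 35 / 8 * (z * |z|)) =
      fun z => 14 + 63 / 4 * z - 35 / 4 * |z| := funext fun z => (hb_f z).deriv
  have hx0 : ∀ t : ℕ, t % 3 = 0 →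
      (if t % 3 = 0 then (0 : ℝ) else if t % 3 = 1 then -2 else 1) = 0 := by
    intro t h; simp [h]
  have hx1 : ∀ t : ℕ, t % 3 = 1 →
      (if t % 3 = 0 then (0 : ℝ) else if t % 3 = 1 then -2 else 1) = -2 := by
    intro t h; simp [h]
  have hx2 : ∀ t : ℕ, t % 3 = 2 →
      (if t % 3 = 0 then (0 : ℝ) else if t % 3 = 1 then -2 else 1) = 1 := by
    intro t h; simp [h]
  refine ⟨fun z => 14 * z + 63 / 8 * z ^ 2 - 35 / 8 * (z * |z|),
    fun t => if t % 3 = 0 then 0 else if t % 3 = 1 then -2 else 1,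
    fun z => (hb_f z).differentiableAt, ?_, ?_, ?_, ?_, ?_, ?_⟩
  · refine Monotone.convexOn_univ_of_deriv (fun z => (hb_h z).differentiableAt) ?_
    intro a b hab
    rw [(hb_h a).deriv, (hb_h b).deriv]
    have := abs_le.1 (abs_abs_sub_abs_le b a)
    rw [abs_of_nonneg (sub_nonneg.2 hab)] at this
    linarith [this.1, this.2]
  · rw [hd]
    refine LipschitzWith.of_dist_le_mul fun a b => ?_
    rw [Real.dist_eq, Real.dist_eq]
    have := abs_le.1 (abs_abs_sub_abs_le a b)
    have h1 := le_abs_self (a - b)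
    have h2 := neg_abs_le (a - b)
    norm_num
    rw [abs_le]
    constructor <;> linarith [this.1, this.2]
  · intro t ht
    rw [hd]
    have h3 : t % 3 = 0 ∨ t % 3 = 1 ∨ t % 3 = 2 := by omega
    rcases h3 with h | h | h
    · simp only []
      rw [hx0 t h, hx1 (t + 1) (by omega), hx2 (t - 1) (by omega), hγ, hβ]
      norm_num
    · simp only []
      rw [hx1 t h, hx2 (t + 1) (by omega), hx0 (t - 1) (by omega), hγ, hβ]
      norm_num
    · simp only []
      rw [hx2 t h, hx0 (t + 1) (by omega), hx1 (t - 1) (by omega), hγ, hβ]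
      norm_num
  · intro t
    simp
  · exact ⟨0, 1, by norm_num⟩
  · rintro ⟨l, hl⟩
    have t0 : Filter.Tendsto (fun n : ℕ => 3 * n) Filter.atTop Filter.atTop :=
      Filter.tendsto_atTop_mono (fun n => by simp only [id]; omega) Filter.tendsto_id
    have t1 : Filter.Tendsto (fun n : ℕ => 3 * n + 1) Filter.atTop Filter.atTop :=
      Filter.tendsto_atTop_mono (fun n => by simp only [id]; omega) Filter.tendsto_id
    have e0 : Filter.Tendsto (fun _ : ℕ => (0 : ℝ)) Filter.atTop (nhds l) :=
      (hl.comp t0).congr fun n => hx0 (3 * n) (by omega)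
    have e1 : Filter.Tendsto (fun _ : ℕ => (-2 : ℝ)) Filter.atTop (nhds l) :=
      (hl.comp t1).congr fun n => hx1 (3 * n + 1) (by omega)
    have a0 := tendsto_nhds_unique e0 tendsto_const_nhds
    have a1 := tendsto_nhds_unique e1 tendsto_const_nhds
    linarith
end
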